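/- arXiv:1301.5633 — 4 statements merged into one kernel-verified Lean document; each statement's English description precedes it below -/
import Mathlib

section
/- Let α₀ < α₁ be real numbers and δ₁ > 0. Then there exists a smooth complex-valued function ψ on ℝ, with support contained in the open interval (α₀ − δ₁/5, α₁ + δ₁/5) and with ψ = 1 on a neighborhood of [α₀ − δ₁/6, α₁ + δ₁/6], such that ψ(λ)² + (λ − ω)(ψ(λ) − 1) ≠ 0 for all λ ∈ ℝ and all ω ∈ [α₀, α₁]. -/
/-- given `α₀ < α₁` and `δ₁ > 0`, there is a smooth complex-valued `ψ` on `ℝ`,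
supported in `(α₀ − δ₁/5, α₁ + δ₁/5)` and equal to `1` on a neighborhood of
`[α₀ − δ₁/6, α₁ + δ₁/6]`, such that `ψ(λ)² + (λ − ω)(ψ(λ) − 1) ≠ 0` for all real `λ`
and all `ω ∈ [α₀, α₁]`. -/
theorem stmt_9 (α₀ α₁ δ₁ : ℝ) (hα : α₀ < α₁) (hδ : 0 < δ₁) :
    ∃ ψ : ℝ → ℂ, ContDiff ℝ (⊤ : ℕ∞) ψ ∧
      tsupport ψ ⊆ Set.Ioo (α₀ - δ₁/5) (α₁ + δ₁/5) ∧
      (∃ U : Set ℝ, IsOpen U ∧ Set.Icc (α₀ - δ₁/6) (α₁ + δ₁/6) ⊆ U ∧ ∀ x ∈ U, ψ x = 1) ∧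
      ∀ x : ℝ, ∀ ω ∈ Set.Icc α₀ α₁,
        ψ x ^ 2 + Complex.ofReal (x - ω) * (ψ x - 1) ≠ 0 := by
  let f : ContDiffBump ((α₀ + α₁) / 2) :=
    ⟨(α₁ - α₀) / 2 + 2 * δ₁ / 11, (α₁ - α₀) / 2 + 3 * δ₁ / 16, by linarith, by linarith⟩
  have hf : ContDiff ℝ (⊤ : ℕ∞) (fun x => f x) := f.contDiff
  have hone : ∀ x ∈ Set.Ioo (α₀ - 2 * δ₁ / 11) (α₁ + 2 * δ₁ / 11), f x = 1 := by
    intro x hx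
    apply f.one_of_mem_closedBall
    rw [Real.closedBall_eq_Icc]
    change x ∈ Set.Icc (_ - ((α₁ - α₀) / 2 + 2 * δ₁ / 11)) (_ + ((α₁ - α₀) / 2 + 2 * δ₁ / 11))
    constructor <;> linarith [hx.1, hx.2]
  have hsupp : tsupport (fun x => f x) ⊆ Set.Ioo (α₀ - δ₁/5) (α₁ + δ₁/5) := by
    intro x hx
    have hx : x ∈ tsupport f := hx
    rw [f.tsupport_eq, Real.closedBall_eq_Icc] at hx
    change x ∈ Set.Icc (_ - ((α₁ - α₀) / 2 + 3 * δ₁ / 16)) (_ + ((α₁ - α₀) / 2 + 3 * δ₁ / 16)) at hx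
    constructor <;> linarith [hx.1, hx.2]
  have hC : ContDiff ℝ (⊤ : ℕ∞) (fun x : ℝ => ((f x : ℝ) : ℂ)) :=
    Complex.ofRealCLM.contDiff.comp hf
  refine ⟨fun x => (f x : ℂ) + (f x : ℂ) * (1 - (f x : ℂ)) * Complex.I, ?_, ?_, ?_, ?_⟩
  · exact hC.add ((hC.mul (contDiff_const.sub hC)).mul contDiff_const)
  · refine (closure_mono ?_).trans hsupp
    intro x hx h0
    apply hx
    have h0 : f x = 0 := h0
    simp [h0]
  · refine ⟨Set.Ioo (α₀ - 2 * δ₁ / 11) (α₁ + 2 * δ₁ / 11), isOpen_Ioo, ?_, fun x hx => by simp [hone x hx]⟩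
    intro x hx
    constructor <;> linarith [hx.1, hx.2]
  · intro x ω hω h
    beta_reduce at h
    have hs0 : 0 ≤ f x := f.nonneg
    have hs1 : f x ≤ 1 := f.le_one
    have hz : f x = 0 → x - ω ≠ 0 := by
      intro h0 hx
      have : f x = 1 := hone x ⟨by linarith [hω.1], by linarith [hω.2]⟩
      linarith
    generalize f x = s at *
    generalize x - ω = t at *
    have hre := congrArg Complex.re h
    have him := congrArg Complex.im h
    simp [pow_two] at hre him
    rcases eq_or_lt_of_le hs0 with h0 | h0
    · subst h0
      have hre : t = 0 := by linarith
      exact hz rfl hre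
    rcases eq_or_lt_of_le hs1 with h1 | h1
    · subst h1
      norm_num at hre
    have hb : 0 < s * (1 - s) := mul_pos h0 (by linarith)
    have ht : t = -2 * s := by
      have : (s * (1 - s)) * (t + 2 * s) = 0 := by linarith
      rcases mul_eq_zero.1 this with h | h <;> linarith
    subst ht
    have : s * (2 - s - s * (1 - s) ^ 2) = 0 := by linarith
    rcases mul_eq_zero.1 this with h | h
    · linarith
    · nlinarith [mul_pos hb h0]
end

section
/- Fix E > 0 and define on ℝ² (coordinates (r,ρ)): p(r,ρ) = √(ρ² + E/cosh²r), φ₊(r,ρ) = ρ − p(r,ρ) tanh r, φ₋(r,ρ) = ρ + p(r,ρ) tanh r, c₊(r,ρ) = 1 + (ρ/p(r,ρ)) tanh r, c₋(r,ρ) = 1 − (ρ/p(r,ρ)) tanh r, and the Hamiltonian derivative H_p f = (∂_ρ p)(∂_r f) − (∂_r p)(∂_ρ f). Then everywhere on ℝ²: H_p r = ρ/p, H_p ρ = (p² − ρ²) tanh(r)/p, H_p φ₊ = −c₊ φ₊, H_p φ₋ = c₋ φ₋; and the Poisson bracket {φ₊, φ₋} = (∂_ρ φ₊)(∂_r φ₋)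 − (∂_r φ₊)(∂_ρ φ₋) evaluated at (r,ρ) = (0,0) equals 2√E = 2 p(0,0). -/
/-- `p(r,ρ) = √(ρ² + E/cosh²r)`. -/
noncomputable def pF (E : ℝ) (q : ℝ × ℝ) : ℝ :=
  Real.sqrt (q.2 ^ 2 + E / Real.cosh q.1 ^ 2)

/-- `φ₊(r,ρ) = ρ − p(r,ρ) tanh r`. -/
noncomputable def phiP (E : ℝ) (q : ℝ × ℝ) : ℝ := q.2 - pF E q * Real.tanh q.1

/-- `φ₋(r,ρ) = ρ + p(r,ρ) tanh r`. -/
noncomputable def phiM (E : ℝ) (q : ℝ × ℝ) : ℝ := q.2 + pF E q * Real.tanh q.1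

/-- `c₊(r,ρ) = 1 + (ρ/p) tanh r`. -/
noncomputable def cP (E : ℝ) (q : ℝ × ℝ) : ℝ := 1 + q.2 / pF E q * Real.tanh q.1

/-- `c₋(r,ρ) = 1 − (ρ/p) tanh r`. -/
noncomputable def cM (E : ℝ) (q : ℝ × ℝ) : ℝ := 1 - q.2 / pF E q * Real.tanh q.1

/-- The Hamiltonian derivative `H_p f = (∂_ρ p)(∂_r f) − (∂_r p)(∂_ρ f)`. -/
noncomputable def Hp (E : ℝ) (f : ℝ × ℝ → ℝ) (q : ℝ × ℝ) : ℝ :=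
  deriv (fun s => pF E (q.1, s)) q.2 * deriv (fun s => f (s, q.2)) q.1 -
    deriv (fun s => pF E (s, q.2)) q.1 * deriv (fun s => f (q.1, s)) q.2

theorem aux_pos (E : ℝ) (hE : 0 < E) (r s : ℝ) : 0 < s ^ 2 + E / Real.cosh r ^ 2 := by
  have := Real.cosh_pos r
  positivity

theorem aux_pF_pos (E : ℝ) (hE : 0 < E) (r s : ℝ) : 0 < pF E (r, s) :=
  Real.sqrt_pos.mpr (aux_pos E hE r s)

theorem aux_tanh (r : ℝ) : HasDerivAt Real.tanh (1 - Real.tanh r ^ 2) r := by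
  have hc := (Real.cosh_pos r).ne'
  have h := (Real.hasDerivAt_sinh r).div (Real.hasDerivAt_cosh r) hc
  have e : Real.tanh = Real.sinh / Real.cosh := by
    funext x
    simp [Real.tanh_eq_sinh_div_cosh]
  have e2 : 1 - Real.tanh r ^ 2 =
      (Real.cosh r * Real.cosh r - Real.sinh r * Real.sinh r) / Real.cosh r ^ 2 := by
    rw [Real.tanh_eq_sinh_div_cosh]
    field_simp
  rw [e2, e]
  exact h

theorem aux_ps (E : ℝ) (hE : 0 < E) (r s : ℝ) :
    HasDerivAt (fun x => pF E (r, x)) (s / pF E (r, s)) s := by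
  have h := (((hasDerivAt_id s).pow 2).add_const (E / Real.cosh r ^ 2)).sqrt
    (aux_pos E hE r s).ne'
  have hp := aux_pF_pos E hE r s
  change HasDerivAt (fun x => pF E (r, x))
    ((2 : ℕ) * s ^ (2 - 1) * 1 / (2 * pF E (r, s))) s at h
  convert h using 1
  field_simp
  norm_num
  ring

theorem aux_pr (E : ℝ) (hE : 0 < E) (r s : ℝ) :
    HasDerivAt (fun x => pF E (x, s))
      (-((pF E (r, s) ^ 2 - s ^ 2) * Real.tanh r / pF E (r, s))) r := by
  have hc := (Real.cosh_pos r).ne'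
  have h := ((((hasDerivAt_const r E).div ((Real.hasDerivAt_cosh r).pow 2)
    (pow_ne_zero 2 hc))).const_add (s ^ 2)).sqrt (aux_pos E hE r s).ne'
  have hp := aux_pF_pos E hE r s
  have hsq : pF E (r, s) ^ 2 = s ^ 2 + E / Real.cosh r ^ 2 :=
    Real.sq_sqrt (aux_pos E hE r s).le
  rw [hsq, Real.tanh_eq_sinh_div_cosh]
  change HasDerivAt (fun x => pF E (x, s))
    ((0 * Real.cosh r ^ 2 - E * ((2 : ℕ) * Real.cosh r ^ (2 - 1) * Real.sinh r)) /
      (Real.cosh r ^ 2) ^ 2 / (2 * pF E (r, s))) r at h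
  convert h using 1
  clear hsq h
  generalize pF E (r, s) = p at hp ⊢
  push_cast
  field_simp
  ring

theorem aux_phiP_s (E : ℝ) (hE : 0 < E) (r s : ℝ) :
    HasDerivAt (fun x => phiP E (r, x)) (1 - s / pF E (r, s) * Real.tanh r) s :=
  (hasDerivAt_id s).sub ((aux_ps E hE r s).mul_const (Real.tanh r))

theorem aux_phiM_s (E : ℝ) (hE : 0 < E) (r s : ℝ) :
    HasDerivAt (fun x => phiM E (r, x)) (1 + s / pF E (r, s) * Real.tanh r) s :=
  (hasDerivAt_id s).add ((aux_ps E hE r s).mul_const (Real.tanh r))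

theorem aux_phiP_r (E : ℝ) (hE : 0 < E) (r s : ℝ) :
    HasDerivAt (fun x => phiP E (x, s))
      (-(-((pF E (r, s) ^ 2 - s ^ 2) * Real.tanh r / pF E (r, s)) * Real.tanh r
        + pF E (r, s) * (1 - Real.tanh r ^ 2))) r :=
  ((aux_pr E hE r s).mul (aux_tanh r)).const_sub s

theorem aux_phiM_r (E : ℝ) (hE : 0 < E) (r s : ℝ) :
    HasDerivAt (fun x => phiM E (x, s))
      (-((pF E (r, s) ^ 2 - s ^ 2) * Real.tanh r / pF E (r, s)) * Real.tanh r
        + pF E (r, s) * (1 - Real.tanh r ^ 2)) r :=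
  ((aux_pr E hE r s).mul (aux_tanh r)).const_add s

/-- on all of `ℝ²` one has `H_p r = ρ/p`, `H_p ρ = (p² − ρ²) tanh r / p`,
`H_p φ₊ = −c₊ φ₊`, `H_p φ₋ = c₋ φ₋`, and the Poisson bracket
`{φ₊, φ₋} = (∂_ρ φ₊)(∂_r φ₋) − (∂_r φ₊)(∂_ρ φ₋)` at `(0,0)` equals `2√E = 2 p(0,0)`. -/
theorem stmt_10 (E : ℝ) (hE : 0 < E) :
    (∀ q : ℝ × ℝ, Hp E (fun q' => q'.1) q = q.2 / pF E q) ∧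
    (∀ q : ℝ × ℝ, Hp E (fun q' => q'.2) q = (pF E q ^ 2 - q.2 ^ 2) * Real.tanh q.1 / pF E q) ∧
    (∀ q : ℝ × ℝ, Hp E (phiP E) q = -(cP E q * phiP E q)) ∧
    (∀ q : ℝ × ℝ, Hp E (phiM E) q = cM E q * phiM E q) ∧
    (deriv (fun s => phiP E (0, s)) 0 * deriv (fun s => phiM E (s, 0)) 0 -
        deriv (fun s => phiP E (s, 0)) 0 * deriv (fun s => phiM E (0, s)) 0 = 2 * Real.sqrt E ∧
      2 * Real.sqrt E = 2 * pF E (0, 0)) := by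
  refine ⟨?_, ?_, ?_, ?_, ?_, ?_⟩
  · rintro ⟨r, s⟩
    simp [Hp, (aux_ps E hE r s).deriv]
  · rintro ⟨r, s⟩
    simp [Hp, (aux_pr E hE r s).deriv]
  · rintro ⟨r, s⟩
    have hp := (aux_pF_pos E hE r s).ne'
    simp only [Hp, (aux_ps E hE r s).deriv, (aux_pr E hE r s).deriv,
      (aux_phiP_s E hE r s).deriv, (aux_phiP_r E hE r s).deriv]
    simp only [cP, phiP]
    field_simp
    ring
  · rintro ⟨r, s⟩
    have hp := (aux_pF_pos E hE r s).ne'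
    simp only [Hp, (aux_ps E hE r s).deriv, (aux_pr E hE r s).deriv,
      (aux_phiM_s E hE r s).deriv, (aux_phiM_r E hE r s).deriv]
    simp only [cM, phiM]
    field_simp
    ring
  · rw [(aux_phiP_s E hE 0 0).deriv, (aux_phiM_s E hE 0 0).deriv,
      (aux_phiP_r E hE 0 0).deriv, (aux_phiM_r E hE 0 0).deriv]
    simp [pF]
    ring
  · simp [pF]
end

section
/- Fix E > 0 and define p(r,ρ) = √(ρ² + E/cosh²r) on ℝ². Consider the Hamiltonian system r′(t) = (∂_ρ p)(r(t),ρ(t)), ρ′(t) = −(∂_r p)(r(t),ρ(t)). Then: (i) for every initial condition (r₀,ρ₀) ∈ ℝ² the maximal solution is defined for all t ∈ ℝ; (ii) the forward trajectory satisfies sup_{t ≥ 0} |r(t)| < ∞ if and only if ρ₀ = −p(r₀,ρ₀) tanh r₀; (iii) the backward trajectory satisfies sup_{t ≤ 0} |r(t)| < ∞ if and only if ρ₀ = p(r₀,ρ₀) tanh r₀; consequently the full trajectory is bounded if and only if (r₀,ρ₀) = (0,0). -/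
open Real in
lemma aux_bdd (A B : ℝ) :
    (∃ M : ℝ, ∀ t : ℝ, 0 ≤ t → |arsinh (A * exp t + B * exp (-t))| ≤ M) ↔ A = 0 := by
  constructor
  · rintro ⟨M, hM⟩
    by_contra hA
    have hA' : 0 < |A| := abs_pos.mpr hA
    have key : ∀ t : ℝ, 0 ≤ t → |A| * exp t ≤ sinh M + |B| := by
      intro t ht
      have h := abs_le.mp (hM t ht)
      have h1 : A * exp t + B * exp (-t) ≤ sinh M := by
        rw [← sinh_arsinh (A * exp t + B * exp (-t))]
        exact sinh_le_sinh.mpr h.2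
      have h2 : -sinh M ≤ A * exp t + B * exp (-t) := by
        rw [← sinh_arsinh (A * exp t + B * exp (-t)), ← sinh_neg]
        exact sinh_le_sinh.mpr h.1
      have h3 : |B * exp (-t)| ≤ |B| := by
        rw [abs_mul, abs_of_pos (exp_pos _)]
        exact mul_le_of_le_one_right (abs_nonneg _) (exp_le_one_iff.mpr (by linarith))
      have h4 : |A| * exp t = |A * exp t| := by rw [abs_mul, abs_of_pos (exp_pos t)]
      rw [h4]
      have h5 := abs_le.mp h3
      rw [abs_le]
      constructor <;> linarith
    have hS : 0 ≤ sinh M + |B| := le_trans (by positivity) (key 0 le_rfl)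
    have h6 := key ((sinh M + |B|) / |A|) (by positivity)
    have h7 := add_one_le_exp ((sinh M + |B|) / |A|)
    have h8 : |A| * ((sinh M + |B|) / |A| + 1) ≤ sinh M + |B| :=
      le_trans (mul_le_mul_of_nonneg_left h7 hA'.le) h6
    have h9 : |A| * ((sinh M + |B|) / |A| + 1) = sinh M + |B| + |A| := by
      field_simp
    linarith
  · rintro rfl
    refine ⟨arsinh |B|, fun t ht => ?_⟩
    have h3 : |B * exp (-t)| ≤ |B| := by
      rw [abs_mul, abs_of_pos (exp_pos _)]
      exact mul_le_of_le_one_right (abs_nonneg _) (exp_le_one_iff.mpr (by linarith))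
    have h5 := abs_le.mp h3
    rw [abs_le, ← arsinh_neg]
    constructor <;> apply arsinh_le_arsinh.mpr <;> linarith

lemma pF_arg_pos (E : ℝ) (hE : 0 < E) (q : ℝ × ℝ) : 0 < q.2 ^ 2 + E / Real.cosh q.1 ^ 2 := by
  have := Real.cosh_pos q.1
  positivity

lemma pF_pos (E : ℝ) (hE : 0 < E) (q : ℝ × ℝ) : 0 < pF E q :=
  Real.sqrt_pos.mpr (pF_arg_pos E hE q)

lemma pF_deriv_snd (E : ℝ) (hE : 0 < E) (q : ℝ × ℝ) :
    deriv (fun s => pF E (q.1, s)) q.2 = q.2 / pF E q := by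
  have h := pF_arg_pos E hE q
  have h1 : HasDerivAt (fun s : ℝ => s ^ 2 + E / Real.cosh q.1 ^ 2) (2 * q.2) q.2 := by
    simpa using (hasDerivAt_pow 2 q.2).add_const (E / Real.cosh q.1 ^ 2)
  have h2 := h1.sqrt h.ne'
  have h3 : deriv (fun s => pF E (q.1, s)) q.2 = _ := h2.deriv
  rw [h3]
  unfold pF
  field_simp

lemma pF_deriv_fst (E : ℝ) (hE : 0 < E) (q : ℝ × ℝ) :
    deriv (fun s => pF E (s, q.2)) q.1
      = -(E * Real.sinh q.1 / (Real.cosh q.1 ^ 3 * pF E q)) := by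
  have h := pF_arg_pos E hE q
  have hc := Real.cosh_pos q.1
  have h1 : HasDerivAt (fun s : ℝ => q.2 ^ 2 + E / Real.cosh s ^ 2)
      (-(2 * E * Real.sinh q.1 / Real.cosh q.1 ^ 3)) q.1 := by
    have := ((hasDerivAt_const q.1 E).div ((Real.hasDerivAt_cosh q.1).pow 2)
      (pow_pos hc 2).ne').const_add (q.2 ^ 2)
    refine this.congr_deriv ?_
    simp
    field_simp
  have h2 := h1.sqrt h.ne'
  have h3 : deriv (fun s => pF E (s, q.2)) q.1 = _ := h2.deriv
  rw [h3]
  have hp : 0 < √(q.2 ^ 2 + E / Real.cosh q.1 ^ 2) := Real.sqrt_pos.mpr h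
  unfold pF
  generalize √(q.2 ^ 2 + E / Real.cosh q.1 ^ 2) = P at *
  field_simp

/-- for the Hamiltonian system `r′ = ∂_ρ p`, `ρ′ = −∂_r p` of
`p(r,ρ) = √(ρ² + E/cosh²r)`: (i) every maximal solution is global in time;
(ii) the forward trajectory is bounded in `r` iff `ρ₀ = −p(r₀,ρ₀) tanh r₀`;
(iii) the backward trajectory is bounded in `r` iff `ρ₀ = p(r₀,ρ₀) tanh r₀`;
consequently the full trajectory is bounded iff `(r₀,ρ₀) = (0,0)`. -/
theorem stmt_11 (E : ℝ) (hE : 0 < E) (q₀ : ℝ × ℝ) :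
    ∃ γ : ℝ → ℝ × ℝ, γ 0 = q₀ ∧
      (∀ t : ℝ, HasDerivAt γ
        (deriv (fun s => pF E ((γ t).1, s)) (γ t).2,
         -deriv (fun s => pF E (s, (γ t).2)) (γ t).1) t) ∧
      ((∃ M : ℝ, ∀ t : ℝ, 0 ≤ t → |(γ t).1| ≤ M) ↔
        q₀.2 = -(pF E q₀ * Real.tanh q₀.1)) ∧
      ((∃ M : ℝ, ∀ t : ℝ, t ≤ 0 → |(γ t).1| ≤ M) ↔
        q₀.2 = pF E q₀ * Real.tanh q₀.1) ∧
      ((∃ M : ℝ, ∀ t : ℝ, ‖γ t‖ ≤ M) ↔ q₀ = (0, 0)) := by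
  obtain ⟨r₀, ρ₀⟩ := q₀
  set P := pF E (r₀, ρ₀) with hPdef
  have hP : 0 < P := pF_pos E hE _
  have hc0 := Real.cosh_pos r₀
  have hP2 : P ^ 2 = ρ₀ ^ 2 + E / Real.cosh r₀ ^ 2 :=
    Real.sq_sqrt (pF_arg_pos E hE (r₀, ρ₀)).le
  obtain ⟨A, hA⟩ : ∃ A, A = (Real.sinh r₀ + Real.cosh r₀ * ρ₀ / P) / 2 := ⟨_, rfl⟩
  obtain ⟨B, hB⟩ : ∃ B, B = (Real.sinh r₀ - Real.cosh r₀ * ρ₀ / P) / 2 := ⟨_, rfl⟩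
  have hAB : P ^ 2 * (1 + 4 * A * B) = E := by
    have h1 : 1 + 4 * A * B = Real.cosh r₀ ^ 2 - (Real.cosh r₀ * ρ₀ / P) ^ 2 := by
      rw [Real.cosh_sq, hA, hB]; ring
    rw [h1]
    have h2 : P ^ 2 * (Real.cosh r₀ ^ 2 - (Real.cosh r₀ * ρ₀ / P) ^ 2)
        = Real.cosh r₀ ^ 2 * (P ^ 2 - ρ₀ ^ 2) := by
      field_simp
    rw [h2, hP2]
    field_simp
    ring
  have hsum : A + B = Real.sinh r₀ := by rw [hA, hB]; ring
  have hdiff : A - B = Real.cosh r₀ * ρ₀ / P := by rw [hA, hB]; ring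
  have hA0 : A = 0 ↔ ρ₀ = -(P * Real.tanh r₀) := by
    rw [hA, Real.tanh_eq_sinh_div_cosh]
    field_simp
    constructor <;> intro h <;> linarith
  have hB0 : B = 0 ↔ ρ₀ = P * Real.tanh r₀ := by
    rw [hB, Real.tanh_eq_sinh_div_cosh]
    field_simp
    constructor <;> intro h <;> linarith
  obtain ⟨s, hs⟩ : ∃ s : ℝ → ℝ, s = fun t => A * Real.exp t + B * Real.exp (-t) := ⟨_, rfl⟩
  obtain ⟨v, hv⟩ : ∃ v : ℝ → ℝ, v = fun t => A * Real.exp t - B * Real.exp (-t) := ⟨_, rfl⟩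
  have hen : ∀ t : ℝ, Real.exp (-t) = (Real.exp t)⁻¹ := fun t => Real.exp_neg t
  have hds : ∀ t, HasDerivAt s (v t) t := by
    intro t
    rw [hs, hv]
    have := ((Real.hasDerivAt_exp t).const_mul A).add
      (((hasDerivAt_neg t).exp).const_mul B)
    exact this.congr_deriv (by ring)
  have hdv : ∀ t, HasDerivAt v (s t) t := by
    intro t
    rw [hs, hv]
    have := ((Real.hasDerivAt_exp t).const_mul A).sub
      (((hasDerivAt_neg t).exp).const_mul B)
    exact this.congr_deriv (by ring)
  have hinv : ∀ t, P ^ 2 * (1 + s t ^ 2) = P ^ 2 * v t ^ 2 + E := by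
    intro t
    rw [← hAB]
    simp only [hs, hv, hen]
    have := Real.exp_pos t
    field_simp
    ring
  obtain ⟨R, hR⟩ : ∃ R : ℝ → ℝ, R = fun t => Real.arsinh (s t) := ⟨_, rfl⟩
  have hsR : ∀ t, Real.sinh (R t) = s t := fun t => by rw [hR]; exact Real.sinh_arsinh _
  have hcR : ∀ t, Real.cosh (R t) ^ 2 = 1 + s t ^ 2 := fun t => by
    rw [Real.cosh_sq, hsR]; ring
  have hcpos : ∀ t, 0 < Real.cosh (R t) := fun t => Real.cosh_pos _
  have hdR : ∀ t, HasDerivAt R (v t / Real.cosh (R t)) t := by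
    intro t
    have h := (hds t).arsinh
    rw [hR]
    refine h.congr_deriv ?_
    simp only [Real.cosh_arsinh, smul_eq_mul]
    ring
  obtain ⟨Q, hQ⟩ : ∃ Q : ℝ → ℝ, Q = fun t => P * v t / Real.cosh (R t) := ⟨_, rfl⟩
  have hdQ : ∀ t, HasDerivAt Q (E * s t / (Real.cosh (R t) ^ 3 * P)) t := by
    intro t
    have h := ((hdv t).const_mul P).div ((hdR t).cosh) (hcpos t).ne'
    rw [hQ]
    refine h.congr_deriv ?_
    rw [hsR]
    have hE' : E = P ^ 2 * Real.cosh (R t) ^ 2 - P ^ 2 * v t ^ 2 := by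
      rw [hcR]; linarith [hinv t]
    rw [hE']
    have := hcpos t
    field_simp
  have hpc : ∀ t, pF E (R t, Q t) = P := by
    intro t
    have hE' : E = P ^ 2 * Real.cosh (R t) ^ 2 - P ^ 2 * v t ^ 2 := by
      rw [hcR]; linarith [hinv t]
    have : Q t ^ 2 + E / Real.cosh (R t) ^ 2 = P ^ 2 := by
      have := hcpos t
      rw [hQ]
      rw [hE']
      field_simp
      ring
    unfold pF
    simp only [this]
    exact Real.sqrt_sq hP.le
  have hR0 : R 0 = r₀ := by simp [hR, hs, hsum]
  have hQ0 : Q 0 = ρ₀ := by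
    simp only [hQ, hR0]
    simp only [hv, neg_zero, Real.exp_zero, mul_one, hdiff]
    field_simp
  have hfwd : (∃ M : ℝ, ∀ t : ℝ, 0 ≤ t → |R t| ≤ M) ↔ ρ₀ = -(P * Real.tanh r₀) := by
    rw [← hA0, ← aux_bdd A B, hR, hs]
  have hbwd : (∃ M : ℝ, ∀ t : ℝ, t ≤ 0 → |R t| ≤ M) ↔ ρ₀ = P * Real.tanh r₀ := by
    rw [← hB0, ← aux_bdd B A, hR, hs]
    constructor
    · rintro ⟨M, h⟩
      refine ⟨M, fun t ht => ?_⟩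
      have := h (-t) (by linarith)
      simpa [add_comm] using this
    · rintro ⟨M, h⟩
      refine ⟨M, fun t ht => ?_⟩
      have := h (-t) (by linarith)
      simpa [add_comm] using this
  refine ⟨fun t => (R t, Q t), by simp [hR0, hQ0], ?_, hfwd, hbwd, ?_⟩
  · intro t
    have h1 := pF_deriv_snd E hE (R t, Q t)
    have h2 := pF_deriv_fst E hE (R t, Q t)
    simp only [hpc, hsR] at h1 h2
    simp only [h1, h2, neg_neg]
    refine HasDerivAt.prodMk ((hdR t).congr_deriv ?_) (hdQ t)
    rw [hQ]
    field_simp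
  · constructor
    · rintro ⟨M, hM⟩
      have hb : ∀ t, |R t| ≤ M := fun t => (norm_fst_le (R t, Q t)).trans (hM t)
      have a0 : A = 0 := hA0.mpr (hfwd.mp ⟨M, fun t _ => hb t⟩)
      have b0 : B = 0 := hB0.mpr (hbwd.mp ⟨M, fun t _ => hb t⟩)
      have e1 : R 0 = 0 := by simp [hR, hs, a0, b0]
      have e2 : Q 0 = 0 := by simp [hQ, hv, a0, b0]
      rw [← hR0, ← hQ0, e1, e2]
    · intro h
      have h1 : r₀ = 0 := congrArg Prod.fst h
      have h2 : ρ₀ = 0 := congrArg Prod.snd h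
      have a0 : A = 0 := by rw [hA, h1, h2]; simp
      have b0 : B = 0 := by rw [hB, h1, h2]; simp
      refine ⟨0, fun t => ?_⟩
      have e1 : R t = 0 := by simp [hR, hs, a0, b0]
      have e2 : Q t = 0 := by simp [hQ, hv, a0, b0]
      simp [e1, e2]
end

section
/- Fix an integer n ≥ 1. Let a, b ∈ C_c^∞(ℝ^{2n}) and ψ ∈ C_c^∞(ℝⁿ) satisfy the following support separation condition: for all (x,ξ) ∈ ℝ^{2n} and all t ∈ [0,1], if ((x', t x_n), ξ) ∈ supp a then (x, (ξ', t ξ_n)) ∉ supp b. Then for every N ≥ 0 there exists C_N > 0 such that for all h ∈ (0,1] and all u ∈ 𝒮(ℝⁿ), ‖Op_h(b)(ψ · Ξ₀(Op_h(a)(ψ · u)))‖_{L²(ℝⁿ)} ≤ C_N h^N ‖u‖_{L²(ℝⁿ)}. -/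
open MeasureTheory
open scoped RealInnerProductSpace

/-- Points of `ℝⁿ` (with `n = m + 1 ≥ 1`) are written `(x', xₙ)` with
`x' ∈ ℝ^{n-1} = EuclideanSpace ℝ (Fin m)` and `xₙ ∈ ℝ`. -/
abbrev V (m : ℕ) : Type := EuclideanSpace ℝ (Fin m) × ℝ

/-- The standard quantization `Op_h(b)u(x) = (2πh)^{-n} ∫ e^{(i/h)(x−y)·ξ} b(x,ξ) u(y) dy dξ`. -/
noncomputable def OpS (m : ℕ) (h : ℝ) (b : V m × V m → ℂ) (u : V m → ℂ) (x : V m) : ℂ :=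
  ((2 * Real.pi * h) ^ (m + 1))⁻¹ •
    ∫ p : V m × V m,
      Complex.exp (Complex.I *
        Complex.ofReal ((⟪x.1 - p.1.1, p.2.1⟫ + (x.2 - p.1.2) * p.2.2) / h)) *
      b (x, p.2) * u p.1

/-- The operator `Ξ₀g(x', xₙ) = ∫₀¹ (∂_{xₙ}g)(x', t xₙ) dt`, so that
`xₙ · Ξ₀g(x', xₙ) = g(x', xₙ) − g(x', 0)`. -/
noncomputable def Xi0 (m : ℕ) (g : V m → ℂ) (x : V m) : ℂ :=
  ∫ t in (0:ℝ)..1, deriv (fun s : ℝ => g (x.1, s)) (t * x.2)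


section NSP
set_option linter.unusedSectionVars false
variable {P E : Type*} [NormedAddCommGroup P] [NormedSpace ℝ P]
  [NormedAddCommGroup E] [NormedSpace ℝ E] [FiniteDimensional ℝ E]
  [MeasurableSpace E] [BorelSpace E]

/-- The derivative of a function on `P × E` in a direction of `E`. -/
noncomputable def dE {F : Type*} [NormedAddCommGroup F] [NormedSpace ℝ F]
    (G : P × E → F) (v : E) (q : P × E) : F :=
  fderiv ℝ G q ((0 : P), v)

lemma slice_hasFDerivAt {F : Type*} [NormedAddCommGroup F] [NormedSpace ℝ F]
    {G : P × E → F} (hG : ContDiff ℝ (⊤ : ℕ∞) G) (p : P) (z : E) :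
    HasFDerivAt (fun z => G (p, z)) ((fderiv ℝ G (p, z)).comp (ContinuousLinearMap.inr ℝ P E)) z := by
  have h1 : HasFDerivAt G (fderiv ℝ G (p, z)) (p, z) :=
    ((hG.differentiable (by simp)) (p, z)).hasFDerivAt
  exact h1.comp z (hasFDerivAt_prodMk_right p z)

lemma dE_contDiff {F : Type*} [NormedAddCommGroup F] [NormedSpace ℝ F]
    {G : P × E → F} (hG : ContDiff ℝ (⊤ : ℕ∞) G) (v : E) : ContDiff ℝ (⊤ : ℕ∞) (dE G v) := by
  have := hG.fderiv_right (m := ((⊤ : ℕ∞) : WithTop ℕ∞)) (by simp)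
  exact this.clm_apply contDiff_const

lemma slice_compact {G : P × E → ℂ} (hGc : HasCompactSupport G) (p : P) :
    HasCompactSupport (fun z => G (p, z)) := by
  refine HasCompactSupport.intro (hGc.image continuous_snd) (fun z hz => ?_)
  by_contra h
  exact hz ⟨(p, z), subset_tsupport _ h, rfl⟩

lemma nsp_ibp (μ : Measure E) [μ.IsAddHaarMeasure] (Φ : P × E → ℝ) (hΦ : ContDiff ℝ (⊤ : ℕ∞) Φ)
    (G : P × E → ℂ) (hG : ContDiff ℝ (⊤ : ℕ∞) G) (hGc : HasCompactSupport G)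
    (v : E) (p : P) (h : ℝ) (hh : 0 < h) :
    ∫ z, Complex.exp (Complex.I * Complex.ofReal (Φ (p, z) / h)) *
        (((dE Φ v (p, z) : ℝ) : ℂ) * G (p, z)) ∂μ =
      Complex.I * h * ∫ z, Complex.exp (Complex.I * Complex.ofReal (Φ (p, z) / h)) *
        dE G v (p, z) ∂μ := by
  have hΦd := fun z => slice_hasFDerivAt hΦ p z
  have hGd := fun z => slice_hasFDerivAt hG p z
  have hcont : Continuous (fun z : E => Complex.exp (Complex.I * Complex.ofReal (Φ (p, z) / h))) := by
    have := hΦ.continuous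
    fun_prop
  have hGcont : Continuous (fun z : E => G (p, z)) := by
    have := hG.continuous
    fun_prop
  have hd1 : Continuous (fun z : E => dE G v (p, z)) := by
    have := (dE_contDiff hG v).continuous
    fun_prop
  have hd2 : Continuous (fun z : E => dE Φ v (p, z)) := by
    have := (dE_contDiff hΦ v).continuous
    fun_prop
  have hGs := slice_compact hGc p
  have hdGs : HasCompactSupport (fun z : E => dE G v (p, z)) := by
    apply slice_compact (G := dE G v)
    exact hGc.mono' ((subset_tsupport _).trans (tsupport_fderiv_apply_subset ℝ _))
  have hed : ∀ z, HasFDerivAt (fun z : E => Complex.exp (Complex.I * Complex.ofReal (Φ (p, z) / h)))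
      (Complex.exp (Complex.I * Complex.ofReal (Φ (p, z) / h)) • (Complex.I •
        (Complex.ofRealCLM.comp ((h⁻¹ : ℝ) • (fderiv ℝ Φ (p, z)).comp (ContinuousLinearMap.inr ℝ P E))))) z := by
    intro z
    apply HasFDerivAt.cexp
    apply HasFDerivAt.const_mul
    have := Complex.ofRealCLM.hasFDerivAt.comp z ((hΦd z).const_mul h⁻¹)
    convert! this using 2
    simp [div_eq_inv_mul]
  have key := integral_mul_fderiv_eq_neg_fderiv_mul_of_integrable (μ := μ) (v := v)
    (f := fun z : E => Complex.exp (Complex.I * Complex.ofReal (Φ (p, z) / h)))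
    (g := fun z => G (p, z)) ?_ ?_ ?_ ?_ ?_
  · have e1 : ∀ z, fderiv ℝ (fun z => G (p, z)) z v = dE G v (p, z) := fun z => by
      rw [(hGd z).fderiv]; simp [dE]
    have e2 : ∀ z, fderiv ℝ (fun z : E => Complex.exp (Complex.I * Complex.ofReal (Φ (p, z) / h))) z v
        * G (p, z) = (Complex.I / h) * (Complex.exp (Complex.I * Complex.ofReal (Φ (p, z) / h)) *
        (((dE Φ v (p, z) : ℝ) : ℂ) * G (p, z))) := fun z => by
      rw [(hed z).fderiv]; simp [dE]; ring
    simp only [e1, e2] at key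
    rw [integral_const_mul] at key
    rw [key]
    have : (h : ℂ) ≠ 0 := by exact_mod_cast hh.ne'
    field_simp
    simp
  · have e2 : ∀ z, fderiv ℝ (fun z : E => Complex.exp (Complex.I * Complex.ofReal (Φ (p, z) / h))) z v
        = (Complex.I / h) * Complex.exp (Complex.I * Complex.ofReal (Φ (p, z) / h)) *
        ((dE Φ v (p, z) : ℝ) : ℂ)  := fun z => by
      rw [(hed z).fderiv]; simp [dE]; ring
    simp only [e2]
    refine Continuous.integrable_of_hasCompactSupport (by fun_prop) (hGs.mul_left)
  · have e1 : ∀ z, fderiv ℝ (fun z => G (p, z)) z v = dE G v (p, z) := fun z => by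
      rw [(hGd z).fderiv]; simp [dE]
    simp only [e1]
    exact Continuous.integrable_of_hasCompactSupport (by fun_prop) (hdGs.mul_left)
  · exact Continuous.integrable_of_hasCompactSupport (by fun_prop) (hGs.mul_left)
  · exact fun z _ => (hed z).differentiableAt
  · exact fun z _ => (hGd z).differentiableAt

theorem nsp (μ : Measure E) [μ.IsAddHaarMeasure] (Φ : P × E → ℝ) (hΦ : ContDiff ℝ (⊤ : ℕ∞) Φ)
    (N : ℕ) : ∀ (G : P × E → ℂ), ContDiff ℝ (⊤ : ℕ∞) G → HasCompactSupport G →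
    (∀ q ∈ tsupport G, ∃ v : E, dE Φ v q ≠ 0) →
    ∃ C : ℝ, 0 ≤ C ∧ ∀ (h : ℝ), 0 < h → ∀ p : P,
    ‖∫ z, Complex.exp (Complex.I * Complex.ofReal (Φ (p, z) / h)) * G (p, z) ∂μ‖ ≤ C * h ^ N := by
  induction N with
  | zero =>
    intro G hG hGc _
    obtain ⟨M, hM⟩ := hGc.exists_bound_of_continuous hG.continuous
    set K := Prod.snd '' (tsupport G) with hK
    have hKc : IsCompact K := hGc.image continuous_snd
    have hM0 : 0 ≤ M := (norm_nonneg _).trans (hM 0)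
    refine ⟨M * μ.real K, by positivity, fun h hh p => ?_⟩
    have : ∫ z, Complex.exp (Complex.I * Complex.ofReal (Φ (p, z) / h)) * G (p, z) ∂μ =
        ∫ z in K, Complex.exp (Complex.I * Complex.ofReal (Φ (p, z) / h)) * G (p, z) ∂μ := by
      symm
      apply setIntegral_eq_integral_of_forall_compl_eq_zero
      intro z hz
      have : G (p, z) = 0 := by
        by_contra h
        exact hz ⟨(p, z), subset_tsupport _ h, rfl⟩
      simp [this]
    rw [this, pow_zero, mul_one]
    refine norm_setIntegral_le_of_norm_le_const hKc.measure_lt_top (fun z _ => ?_)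
    rw [norm_mul, mul_comm Complex.I, Complex.norm_exp_ofReal_mul_I, one_mul]
    exact hM _
  | succ N ih =>
    intro G hG hGc hns
    set bs := Module.finBasis ℝ E
    set Q : P × E → ℝ := fun q => ∑ i, (dE Φ (bs i) q) ^ 2 with hQ
    have hQs : ContDiff ℝ (⊤ : ℕ∞) Q := ContDiff.sum fun i _ => (dE_contDiff hΦ (bs i)).pow 2
    have hQne : ∀ q ∈ tsupport G, Q q ≠ 0 := by
      intro q hq h0
      obtain ⟨v, hv⟩ := hns q hq
      apply hv
      have h1 : ∀ i, dE Φ (bs i) q = 0 := by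
        intro i
        have := (Finset.sum_eq_zero_iff_of_nonneg (fun i _ => sq_nonneg (dE Φ (bs i) q))).1 h0 i
          (Finset.mem_univ i)
        simpa using this
      have : ((fderiv ℝ Φ q).comp (ContinuousLinearMap.inr ℝ P E)).toLinearMap = 0 := by
        apply bs.ext
        intro i
        simpa [dE] using h1 i
      simpa [dE] using LinearMap.congr_fun this v
    set R : P × E → ℂ := fun q => G q / (Q q : ℂ) with hR
    have hRsupp : tsupport R ⊆ tsupport G := by
      apply closure_mono
      intro q hq h0
      exact hq (by simp [hR, h0])
    have hRs : ContDiff ℝ (⊤ : ℕ∞) R := by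
      rw [contDiff_iff_contDiffAt]
      intro q
      by_cases hq : q ∈ tsupport G
      · have h1 : ContDiffAt ℝ (⊤ : ℕ∞) (fun q => ((Q q)⁻¹ : ℝ)) q := hQs.contDiffAt.inv (hQne q hq)
        have h2 := hG.contDiffAt.mul (Complex.ofRealCLM.contDiff.contDiffAt.comp q h1)
        refine h2.congr_of_eventuallyEq (Filter.Eventually.of_forall fun q' => ?_)
        simp [hR, div_eq_mul_inv]
      · have : R =ᶠ[nhds q] fun _ => 0 := by
          filter_upwards [(isClosed_tsupport G).isOpen_compl.mem_nhds hq] with q' hq'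
          simp [hR, image_eq_zero_of_notMem_tsupport hq']
        exact contDiffAt_const.congr_of_eventuallyEq this
    set g : Fin (Module.finrank ℝ E) → P × E → ℂ := fun i q => ((dE Φ (bs i) q : ℝ) : ℂ) * R q with hg
    have hgs : ∀ i, ContDiff ℝ (⊤ : ℕ∞) (g i) := fun i =>
      (Complex.ofRealCLM.contDiff.comp (dE_contDiff hΦ (bs i))).mul hRs
    have hgsupp : ∀ i, tsupport (g i) ⊆ tsupport G := fun i =>
      (tsupport_mul_subset_right).trans hRsupp
    have hgc : ∀ i, HasCompactSupport (g i) := fun i =>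
      hGc.of_isClosed_subset (isClosed_tsupport _) (hgsupp i)
    have hdsupp : ∀ i, tsupport (dE (g i) (bs i)) ⊆ tsupport G := fun i =>
      (tsupport_fderiv_apply_subset ℝ _).trans (hgsupp i)
    choose C hC0 hC using fun i => ih (dE (g i) (bs i)) (dE_contDiff (hgs i) _)
      (hGc.of_isClosed_subset (isClosed_tsupport _) (hdsupp i)) (fun q hq => hns q (hdsupp i hq))
    refine ⟨∑ i, C i, Finset.sum_nonneg fun i _ => hC0 i, fun h hh p => ?_⟩
    have e : ∀ z, Complex.exp (Complex.I * Complex.ofReal (Φ (p, z) / h)) * G (p, z) =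
        ∑ i, Complex.exp (Complex.I * Complex.ofReal (Φ (p, z) / h)) *
          (((dE Φ (bs i) (p, z) : ℝ) : ℂ) * g i (p, z)) := by
      intro z
      rw [← Finset.mul_sum]
      congr 1
      have : ∑ i, ((dE Φ (bs i) (p, z) : ℝ) : ℂ) * g i (p, z) = (Q (p, z) : ℂ) * R (p, z) := by
        simp only [hg, hQ, Complex.ofReal_sum, Finset.sum_mul, Complex.ofReal_pow]
        refine Finset.sum_congr rfl fun i _ => by ring
      rw [this]
      by_cases hq : (p, z) ∈ tsupport G
      · have : (Q (p, z) : ℂ) ≠ 0 := by exact_mod_cast hQne _ hq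
        simp only [hR]; field_simp
      · simp [hR, image_eq_zero_of_notMem_tsupport hq]
    simp_rw [e]
    rw [integral_finsetSum]
    · simp_rw [nsp_ibp μ Φ hΦ (g _) (hgs _) (hgc _) (bs _) p h hh]
      refine (norm_sum_le _ _).trans ?_
      rw [Finset.sum_mul]
      refine Finset.sum_le_sum fun i _ => ?_
      rw [norm_mul, norm_mul, Complex.norm_I, one_mul, Complex.norm_real, Real.norm_of_nonneg hh.le]
      calc h * _ ≤ h * (C i * h ^ N) := mul_le_mul_of_nonneg_left (hC i h hh p) hh.le
        _ = _ := by ring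
    · intro i _
      have h1 := hΦ.continuous
      have h2 := (hgs i).continuous
      have h3 := (dE_contDiff hΦ (bs i)).continuous
      exact Continuous.integrable_of_hasCompactSupport (by fun_prop)
        ((slice_compact (hgc i) p).mul_left.mul_left)

end NSP

/-- The parameter space: `(x, η, w, s, κ)`. -/
abbrev PP (m : ℕ) : Type := V m × V m × V m × ℝ × ℝ

/-- The total phase with parameter `t`. -/
noncomputable def phT (m : ℕ) (x η w : V m) (t : ℝ) (z : V m × V m) : ℝ :=
  (⟪x.1 - z.1.1, z.2.1⟫ + (x.2 - z.1.2) * z.2.2) +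
    (⟪z.1.1 - w.1, η.1⟫ + (t * z.1.2 - w.2) * η.2)

/-- The symbol of `h ∂_n Op_h(a)` (with `κ = h`). -/
noncomputable def cc (m : ℕ) (a : V m × V m → ℂ) (κ : ℝ) (q : V m × V m) : ℂ :=
  Complex.I * (q.2.2 : ℂ) * a q + (κ : ℂ) * fderiv ℝ a q (((0, 1) : V m), (0 : V m))

/-- The total amplitude with parameter `t`. -/
noncomputable def ampT (m : ℕ) (a b : V m × V m → ℂ) (ψ : V m → ℂ) (x η w : V m) (t κ : ℝ)
    (z : V m × V m) : ℂ :=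
  b (x, z.2) * ψ z.1 * cc m a κ (((z.1.1, t * z.1.2) : V m), η) * ψ w

lemma cc_contDiff (m : ℕ) (a : V m × V m → ℂ) (ha : ContDiff ℝ (⊤ : ℕ∞) a) :
    ContDiff ℝ (⊤ : ℕ∞) (fun p : ℝ × (V m × V m) => cc m a p.1 p.2) := by
  have h1 : ContDiff ℝ (⊤ : ℕ∞) (fun q => fderiv ℝ a q (((0, 1) : V m), (0 : V m))) :=
    (ha.fderiv_right (m := ((⊤ : ℕ∞) : WithTop ℕ∞)) (by simp)).clm_apply contDiff_const
  have h2 : ContDiff ℝ (⊤ : ℕ∞) (fun r : ℝ => (r : ℂ)) := Complex.ofRealCLM.contDiff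
  unfold cc
  fun_prop

lemma cc_ne (m : ℕ) (a : V m × V m → ℂ) (κ : ℝ) (q : V m × V m) (h : cc m a κ q ≠ 0) :
    q ∈ tsupport a := by
  by_contra hq
  apply h
  simp [cc, image_eq_zero_of_notMem_tsupport hq, fderiv_of_notMem_tsupport ℝ hq]

lemma ampT_ne (m : ℕ) (a b : V m × V m → ℂ) (ψ : V m → ℂ) (x η w : V m) (t κ : ℝ)
    (z : V m × V m) (h : ampT m a b ψ x η w t κ z ≠ 0) :
    (x, z.2) ∈ tsupport b ∧ z.1 ∈ tsupport ψ ∧ (((z.1.1, t * z.1.2) : V m), η) ∈ tsupport a ∧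
      w ∈ tsupport ψ := by
  unfold ampT at h
  simp only [mul_ne_zero_iff] at h
  exact ⟨subset_tsupport _ h.1.1.1, subset_tsupport _ h.1.1.2, cc_ne _ _ _ _ h.1.2,
    subset_tsupport _ h.2⟩

lemma ampT_contDiff (m : ℕ) (a b : V m × V m → ℂ) (ψ : V m → ℂ)
    (ha : ContDiff ℝ (⊤ : ℕ∞) a) (hb : ContDiff ℝ (⊤ : ℕ∞) b) (hψ : ContDiff ℝ (⊤ : ℕ∞) ψ) :
    ContDiff ℝ (⊤ : ℕ∞) (fun q : PP m × (V m × V m) =>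
      ampT m a b ψ q.1.1 q.1.2.1 q.1.2.2.1 q.1.2.2.2.1 q.1.2.2.2.2 q.2) := by
  have h1 := cc_contDiff m a ha
  have h2 : ContDiff ℝ (⊤ : ℕ∞) (fun q : PP m × (V m × V m) =>
      (q.1.2.2.2.2, (((q.2.1.1, q.1.2.2.2.1 * q.2.1.2) : V m), q.1.2.1))) := by fun_prop
  have h3 := h1.comp h2
  simp only [Function.comp_def] at h3
  unfold ampT
  fun_prop

lemma phT_contDiff (m : ℕ) :
    ContDiff ℝ (⊤ : ℕ∞) (fun q : PP m × (V m × V m) =>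
      phT m q.1.1 q.1.2.1 q.1.2.2.1 q.1.2.2.2.1 q.2) := by
  unfold phT
  have h1 : ContDiff ℝ (⊤ : ℕ∞) (fun q : PP m × (V m × V m) => ⟪q.1.1.1 - q.2.1.1, q.2.2.1⟫) := by
    apply ContDiff.inner ℝ <;> fun_prop
  have h2 : ContDiff ℝ (⊤ : ℕ∞) (fun q : PP m × (V m × V m) => ⟪q.2.1.1 - q.1.2.2.1.1, q.1.2.1.1⟫) := by
    apply ContDiff.inner ℝ <;> fun_prop
  fun_prop

lemma amp_bound (m : ℕ) (a b : V m × V m → ℂ) (ψ : V m → ℂ)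
    (ha : ContDiff ℝ (⊤ : ℕ∞) a) (hac : HasCompactSupport a)
    (hb : ContDiff ℝ (⊤ : ℕ∞) b) (hbc : HasCompactSupport b)
    (hψ : ContDiff ℝ (⊤ : ℕ∞) ψ) (hψc : HasCompactSupport ψ)
    (hsupp : ∀ (x ξ : V m) (t : ℝ), t ∈ Set.Icc (0:ℝ) 1 →
      (((x.1, t * x.2) : V m), ξ) ∈ tsupport a → (x, ((ξ.1, t * ξ.2) : V m)) ∉ tsupport b)
    (N : ℕ) : ∃ C : ℝ, 0 ≤ C ∧ ∀ h : ℝ, 0 < h → h ≤ 1 → ∀ t ∈ Set.Icc (0:ℝ) 1, ∀ x η w : V m,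
      ‖∫ z : V m × V m, Complex.exp (Complex.I * Complex.ofReal (phT m x η w t z / h)) *
        ampT m a b ψ x η w t h z‖ ≤ C * h ^ N := by
  let χ : ContDiffBump (0:ℝ) := ⟨2, 3, by norm_num, by norm_num⟩
  have hχ : ContDiff ℝ (⊤ : ℕ∞) (fun s : ℝ => ((χ s : ℝ) : ℂ)) :=
    Complex.ofRealCLM.contDiff.comp χ.contDiff
  have hχ1 : ∀ s : ℝ, |s| ≤ 2 → χ s = 1 := fun s hs =>
    χ.one_of_mem_closedBall (by simpa using hs)
  have hχ0 : ∀ s : ℝ, χ s ≠ 0 → |s| ≤ 3 := fun s hs => by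
    have : s ∈ Function.support χ := hs
    rw [χ.support_eq] at this
    simpa using (Metric.mem_ball.1 this).le
  let σ : PP m × (V m × V m) → PP m × (V m × V m) := fun q =>
    ((q.1.1, q.1.2.1, q.1.2.2.1, Real.sin q.1.2.2.2.1 ^ 2, q.1.2.2.2.2), q.2)
  have hσ : ContDiff ℝ (⊤ : ℕ∞) σ := by
    have : ContDiff ℝ (⊤ : ℕ∞) Real.sin := Real.contDiff_sin
    simp only [σ]; fun_prop
  let Φ : PP m × (V m × V m) → ℝ := fun q =>
      phT m q.1.1 q.1.2.1 q.1.2.2.1 (Real.sin q.1.2.2.2.1 ^ 2) q.2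
  have hΦ : ContDiff ℝ (⊤ : ℕ∞) Φ := (phT_contDiff m).comp hσ
  let G : PP m × (V m × V m) → ℂ := fun q =>
    ((χ q.1.2.2.2.1 : ℝ) : ℂ) * ((χ q.1.2.2.2.2 : ℝ) : ℂ) *
      ampT m a b ψ q.1.1 q.1.2.1 q.1.2.2.1 (Real.sin q.1.2.2.2.1 ^ 2) q.1.2.2.2.2 q.2
  have hG : ContDiff ℝ (⊤ : ℕ∞) G := by
    have h1 := (ampT_contDiff m a b ψ ha hb hψ).comp hσ
    simp only [Function.comp_def, σ] at h1
    have h2 : ContDiff ℝ (⊤ : ℕ∞) (fun q : PP m × (V m × V m) => ((χ q.1.2.2.2.1 : ℝ) : ℂ)) :=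
      hχ.comp (g := fun s : ℝ => ((χ s : ℝ) : ℂ)) (by fun_prop)
    have h3 : ContDiff ℝ (⊤ : ℕ∞) (fun q : PP m × (V m × V m) => ((χ q.1.2.2.2.2 : ℝ) : ℂ)) :=
      hχ.comp (g := fun s : ℝ => ((χ s : ℝ) : ℂ)) (by fun_prop)
    exact (h2.mul h3).mul h1
  have hGne : ∀ q, G q ≠ 0 → |q.1.2.2.2.1| ≤ 3 ∧ |q.1.2.2.2.2| ≤ 3 ∧
    (q.1.1, q.2.2) ∈ tsupport b ∧ q.2.1 ∈ tsupport ψ ∧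
      (((q.2.1.1, Real.sin q.1.2.2.2.1 ^ 2 * q.2.1.2) : V m), q.1.2.1) ∈ tsupport a ∧
      q.1.2.2.1 ∈ tsupport ψ := by
    intro q hq
    simp only [G, mul_ne_zero_iff] at hq
    exact ⟨hχ0 _ (by simpa using hq.1.1), hχ0 _ (by simpa using hq.1.2), ampT_ne _ _ _ _ _ _ _ _ _ _ hq.2⟩
  have hGc : HasCompactSupport G := by
    obtain ⟨Ra, hRa⟩ := hac.isBounded.exists_norm_le
    obtain ⟨Rb, hRb⟩ := hbc.isBounded.exists_norm_le
    obtain ⟨Rψ, hRψ⟩ := hψc.isBounded.exists_norm_le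
    set R := max 3 (max Ra (max Rb Rψ)) with hR
    have r3 : 3 ≤ R := le_max_left _ _
    have ra : Ra ≤ R := (le_max_left _ _).trans (le_max_right _ _)
    have rb : Rb ≤ R := ((le_max_left _ _).trans (le_max_right _ _)).trans (le_max_right _ _)
    have rψ : Rψ ≤ R := ((le_max_right _ _).trans (le_max_right _ _)).trans (le_max_right _ _)
    refine HasCompactSupport.intro (isCompact_closedBall (0 : PP m × (V m × V m)) R) (fun q hq => ?_)
    by_contra h
    apply hq
    obtain ⟨h1, h2, h3, h4, h5, h6⟩ := hGne q h
    have h3 := (hRb _ h3).trans rb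
    have h4 := (hRψ _ h4).trans rψ
    have h5 := (hRa _ h5).trans ra
    have h6 := (hRψ _ h6).trans rψ
    have h1 := h1.trans r3
    have h2 := h2.trans r3
    rw [mem_closedBall_zero_iff]
    exact norm_prod_le_iff.2 ⟨norm_prod_le_iff.2 ⟨(norm_prod_le_iff.1 h3).1, norm_prod_le_iff.2
      ⟨(norm_prod_le_iff.1 h5).2, norm_prod_le_iff.2 ⟨h6, norm_prod_le_iff.2 ⟨h1, h2⟩⟩⟩⟩,
      norm_prod_le_iff.2 ⟨h4, (norm_prod_le_iff.1 h3).2⟩⟩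
  have hns : ∀ q ∈ tsupport G, ∃ v : V m × V m, dE Φ v q ≠ 0 := by
    intro q hq
    have hcl : tsupport G ⊆ {q | (q.1.1, q.2.2) ∈ tsupport b ∧
      (((q.2.1.1, Real.sin q.1.2.2.2.1 ^ 2 * q.2.1.2) : V m), q.1.2.1) ∈ tsupport a} := by
      refine closure_minimal (fun q hq => ?_) ?_
      · have := hGne q hq
        exact ⟨this.2.2.1, this.2.2.2.2.1⟩
      · exact ((isClosed_tsupport b).preimage (by fun_prop)).inter
          ((isClosed_tsupport a).preimage (by fun_prop))
    obtain ⟨hqb, hqa⟩ := hcl hq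
    obtain ⟨⟨x, η, w, s, κ⟩, ⟨y, ξ⟩⟩ := q
    simp only at hqb hqa
    set t := Real.sin s ^ 2 with ht
    have ht01 : t ∈ Set.Icc (0:ℝ) 1 := ⟨sq_nonneg _, Real.sin_sq_le_one s⟩
    by_contra! hcon
    have hd : ∀ v : V m × V m, dE Φ v ((x, η, w, s, κ), (y, ξ)) =
        ⟪x.1 - y.1, v.2.1⟫ - ⟪v.1.1, ξ.1⟫ + (x.2 - y.2) * v.2.2 - v.1.2 * ξ.2
          + ⟪v.1.1, η.1⟫ + t * v.1.2 * η.2 := by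
      intro v
      have h1 := (slice_hasFDerivAt hΦ (x, η, w, s, κ) (y, ξ)).hasLineDerivAt v
      have h2 : HasLineDerivAt ℝ (fun z : V m × V m => Φ ((x, η, w, s, κ), z))
        (⟪x.1 - y.1, v.2.1⟫ - ⟪v.1.1, ξ.1⟫ + (x.2 - y.2) * v.2.2 - v.1.2 * ξ.2
          + ⟪v.1.1, η.1⟫ + t * v.1.2 * η.2) (y, ξ) v := by
        unfold HasLineDerivAt
        have e : (fun r : ℝ => Φ ((x, η, w, s, κ), (y, ξ) + r • v)) = fun r : ℝ =>
          phT m x η w t (y, ξ) + r * (⟪x.1 - y.1, v.2.1⟫ - ⟪v.1.1, ξ.1⟫ + (x.2 - y.2) * v.2.2 - v.1.2 * ξ.2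
          + ⟪v.1.1, η.1⟫ + t * v.1.2 * η.2) + r ^ 2 * (-⟪v.1.1, v.2.1⟫ - v.1.2 * v.2.2) := by
          funext r
          simp only [Φ, phT, ← ht, Prod.fst_add, Prod.snd_add, Prod.smul_fst, Prod.smul_snd, smul_eq_mul,
            inner_add_left, inner_add_right, inner_sub_left, real_inner_smul_left, real_inner_smul_right]
          ring
        rw [e]
        have := (((hasDerivAt_id (0:ℝ)).mul_const (⟪x.1 - y.1, v.2.1⟫ - ⟪v.1.1, ξ.1⟫ + (x.2 - y.2) * v.2.2 - v.1.2 * ξ.2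
          + ⟪v.1.1, η.1⟫ + t * v.1.2 * η.2)).const_add (phT m x η w t (y, ξ))).add
          (((hasDerivAt_pow 2 (0:ℝ)).mul_const (-⟪v.1.1, v.2.1⟫ - v.1.2 * v.2.2)))
        convert! this using 1
        simp
      have h3 := HasLineDerivAt.unique h1 h2
      simpa [dE] using h3
    have h0 := hcon ((η.1 - ξ.1, t * η.2 - ξ.2), (x.1 - y.1, x.2 - y.2))
    rw [hd] at h0
    simp only at h0
    have h1 : ‖x.1 - y.1‖ ^ 2 + ‖η.1 - ξ.1‖ ^ 2 + (x.2 - y.2) ^ 2 + (t * η.2 - ξ.2) ^ 2 = 0 := by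
      rw [← real_inner_self_eq_norm_sq, ← real_inner_self_eq_norm_sq (η.1 - ξ.1), inner_sub_right (η.1 - ξ.1), ← h0]
      ring
    have k1 : x.1 - y.1 = 0 := by
      rw [← norm_eq_zero, ← sq_eq_zero_iff]; nlinarith [sq_nonneg ‖x.1 - y.1‖, sq_nonneg ‖η.1 - ξ.1‖, sq_nonneg (x.2 - y.2), sq_nonneg (t * η.2 - ξ.2)]
    have k2 : η.1 - ξ.1 = 0 := by
      rw [← norm_eq_zero, ← sq_eq_zero_iff]; nlinarith [sq_nonneg ‖x.1 - y.1‖, sq_nonneg ‖η.1 - ξ.1‖, sq_nonneg (x.2 - y.2), sq_nonneg (t * η.2 - ξ.2)]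
    have k3 : x.2 - y.2 = 0 := by
      rw [← sq_eq_zero_iff]; nlinarith [sq_nonneg ‖x.1 - y.1‖, sq_nonneg ‖η.1 - ξ.1‖, sq_nonneg (x.2 - y.2), sq_nonneg (t * η.2 - ξ.2)]
    have k4 : t * η.2 - ξ.2 = 0 := by
      rw [← sq_eq_zero_iff]; nlinarith [sq_nonneg ‖x.1 - y.1‖, sq_nonneg ‖η.1 - ξ.1‖, sq_nonneg (x.2 - y.2), sq_nonneg (t * η.2 - ξ.2)]
    have exy : x = y := Prod.ext (sub_eq_zero.1 k1) (sub_eq_zero.1 k3)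
    have exi : ξ = (η.1, t * η.2) := Prod.ext (sub_eq_zero.1 k2).symm (sub_eq_zero.1 k4).symm
    subst exy
    rw [exi] at hqb
    exact hsupp x η t ht01 hqa hqb
  have hV : (volume : Measure (V m)).IsAddHaarMeasure :=
    Measure.prod.instIsAddHaarMeasure (volume : Measure (EuclideanSpace ℝ (Fin m))) (volume : Measure ℝ)
  have hVV : (volume : Measure (V m × V m)).IsAddHaarMeasure :=
    Measure.prod.instIsAddHaarMeasure (volume : Measure (V m)) (volume : Measure (V m))
  obtain ⟨C, hC0, hC⟩ := nsp (volume : Measure (V m × V m)) Φ hΦ N G hG hGc hns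
  refine ⟨C, hC0, fun h hh hh1 t ht x η w => ?_⟩
  have hs : Real.sin (Real.arcsin (Real.sqrt t)) ^ 2 = t := by
    rw [Real.sin_arcsin (by linarith [Real.sqrt_nonneg t]) (Real.sqrt_le_one.2 ht.2), Real.sq_sqrt ht.1]
  have hs2 : |Real.arcsin (Real.sqrt t)| ≤ 2 := by
    have := Real.pi_lt_four
    rw [abs_le]
    constructor
    · linarith [Real.neg_pi_div_two_le_arcsin (Real.sqrt t)]
    · linarith [Real.arcsin_le_pi_div_two (Real.sqrt t)]
  have := hC h hh (x, η, w, Real.arcsin (Real.sqrt t), h)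
  simpa only [Φ, G, hs, hχ1 _ hs2, hχ1 h (by rw [abs_of_pos hh]; linarith), Complex.ofReal_one, one_mul] using this

lemma hasDerivAt_integral_cpt {X : Type*} [TopologicalSpace X] [MeasurableSpace X]
    [BorelSpace X] [T2Space X] (μ : Measure X) [IsFiniteMeasureOnCompacts μ] [SecondCountableTopology X]
    (F F' : ℝ → X → ℂ)
    (hF : Continuous (fun q : ℝ × X => F q.1 q.2)) (hF' : Continuous (fun q : ℝ × X => F' q.1 q.2))
    (K : Set X) (hK : IsCompact K) (h0 : ∀ s, ∀ p ∉ K, F s p = 0) (h0' : ∀ s, ∀ p ∉ K, F' s p = 0)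
    (hd : ∀ s p, HasDerivAt (fun s => F s p) (F' s p) s) (s : ℝ) :
    HasDerivAt (fun s => ∫ p, F s p ∂μ) (∫ p, F' s p ∂μ) s := by
  obtain ⟨M, hM⟩ := ((isCompact_closedBall s 1).prod hK).exists_bound_of_continuousOn hF'.continuousOn
  have hsl : ∀ s, Continuous (F s) := fun s => hF.comp (Continuous.prodMk_right s)
  have hsl' : ∀ s, Continuous (F' s) := fun s => hF'.comp (Continuous.prodMk_right s)
  refine (hasDerivAt_integral_of_dominated_loc_of_deriv_le (F := F) (F' := F')
    (bound := K.indicator fun _ => M)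
    (Metric.ball_mem_nhds s one_pos) (Filter.Eventually.of_forall fun s => ?_) ?_ ?_ ?_ ?_ ?_).2
  · exact (hsl s).aestronglyMeasurable
  · exact (hsl s).integrable_of_hasCompactSupport (HasCompactSupport.intro hK (h0 s))
  · exact (hsl' s).aestronglyMeasurable
  · refine Filter.Eventually.of_forall fun p s' hs' => ?_
    by_cases hp : p ∈ K
    · rw [Set.indicator_of_mem hp]
      exact hM (s', p) ⟨Metric.ball_subset_closedBall hs', hp⟩
    · rw [Set.indicator_of_notMem hp, h0' _ _ hp, norm_zero]
  · exact (integrable_indicator_iff hK.measurableSet).2 (integrableOn_const hK.measure_lt_top.ne)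
  · exact Filter.Eventually.of_forall fun p s' _ => hd s' p

lemma integrable_cpt {X Y : Type*} [TopologicalSpace X] [MeasurableSpace X]
    [BorelSpace X] [T2Space X] [SecondCountableTopology X]
    [TopologicalSpace Y] [MeasurableSpace Y]
    [BorelSpace Y] [T2Space Y] [SecondCountableTopology Y]
    (μ : Measure X) [IsFiniteMeasureOnCompacts μ] [SigmaFinite μ]
    (ν : Measure Y) [IsFiniteMeasureOnCompacts ν] [SigmaFinite ν]
    (H : X × (ℝ × Y) → ℂ) (hH : Continuous H) (K : Set X) (L : Set Y) (hK : IsCompact K)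
    (hL : IsCompact L) (h0 : ∀ z t r, H (z, (t, r)) ≠ 0 → z ∈ K ∧ r ∈ L) :
    Integrable H (μ.prod (((volume : Measure ℝ).restrict (Set.Ioc 0 1)).prod ν)) := by
  have e : μ.prod (((volume : Measure ℝ).restrict (Set.Ioc 0 1)).prod ν) =
      (μ.prod ((volume : Measure ℝ).prod ν)).restrict (Set.univ ×ˢ (Set.Ioc 0 1 ×ˢ Set.univ)) := by
    rw [← Measure.prod_restrict, ← Measure.prod_restrict, Measure.restrict_univ, Measure.restrict_univ]
  rw [e]
  have h1 : IntegrableOn H (K ×ˢ (Set.Icc 0 1 ×ˢ L)) (μ.prod ((volume : Measure ℝ).prod ν)) :=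
    hH.continuousOn.integrableOn_compact (hK.prod (isCompact_Icc.prod hL))
  refine IntegrableOn.of_forall_sdiff_eq_zero h1
    (MeasurableSet.univ.prod (measurableSet_Ioc.prod MeasurableSet.univ)) ?_
  rintro ⟨z, t, r⟩ ⟨⟨_, ht, _⟩, hn⟩
  by_contra h
  have := h0 z t r h
  exact hn ⟨this.1, Set.Ioc_subset_Icc_self ht, this.2⟩

lemma opS_hasDerivAt (m : ℕ) (a : V m × V m → ℂ) (ψ : V m → ℂ)
    (ha : ContDiff ℝ (⊤ : ℕ∞) a) (hac : HasCompactSupport a)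
    (hψ : ContDiff ℝ (⊤ : ℕ∞) ψ) (hψc : HasCompactSupport ψ) (u : V m → ℂ) (hu : Continuous u)
    (h : ℝ) (hh : 0 < h) (y : EuclideanSpace ℝ (Fin m)) (s : ℝ) :
    HasDerivAt (fun s : ℝ => OpS m h a (fun w => ψ w * u w) (y, s))
      (((2 * Real.pi * h) ^ (m + 1))⁻¹ • ∫ p : V m × V m,
        Complex.exp (Complex.I *
          Complex.ofReal ((⟪y - p.1.1, p.2.1⟫ + (s - p.1.2) * p.2.2) / h)) *
        ((h⁻¹ : ℝ) * cc m a h (((y, s) : V m), p.2)) * (ψ p.1 * u p.1)) s := by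
  have hψ' := hψ.continuous
  have ha' := ha.continuous
  have hc' := (cc_contDiff m a ha).continuous
  have hhc : (h : ℂ) ≠ 0 := by exact_mod_cast hh.ne'
  unfold OpS
  refine HasDerivAt.fun_const_smul _ ?_
  refine hasDerivAt_integral_cpt (volume : Measure (V m × V m))
    (fun s p => Complex.exp (Complex.I *
        Complex.ofReal ((⟪y - p.1.1, p.2.1⟫ + (s - p.1.2) * p.2.2) / h)) *
      a (((y, s) : V m), p.2) * (ψ p.1 * u p.1))
    (fun s p => Complex.exp (Complex.I *
          Complex.ofReal ((⟪y - p.1.1, p.2.1⟫ + (s - p.1.2) * p.2.2) / h)) *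
        ((h⁻¹ : ℝ) * cc m a h (((y, s) : V m), p.2)) * (ψ p.1 * u p.1)) ?_ ?_
    (tsupport ψ ×ˢ (Prod.snd '' tsupport a)) (hψc.prod (hac.image continuous_snd)) ?_ ?_ ?_ s
  · fun_prop
  · have : Continuous (fun q : ℝ × (V m × V m) => cc m a h (((y, q.1) : V m), q.2.2)) :=
      hc'.comp (g := fun p : ℝ × (V m × V m) => cc m a p.1 p.2)
        (f := fun q : ℝ × (V m × V m) => (h, (((y, q.1) : V m), q.2.2))) (by fun_prop)
    fun_prop
  · intro s p hp
    by_contra hne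
    simp only [mul_ne_zero_iff] at hne
    exact hp ⟨subset_tsupport _ hne.2.1, ⟨_, subset_tsupport _ hne.1.2, rfl⟩⟩
  · intro s p hp
    by_contra hne
    simp only [mul_ne_zero_iff] at hne
    exact hp ⟨subset_tsupport _ hne.2.1, ⟨_, cc_ne _ _ _ _ hne.1.2.2, rfl⟩⟩
  · intro s p
    apply HasDerivAt.mul_const
    have h1 : HasDerivAt (fun s : ℝ => a (((y, s) : V m), p.2))
        (fderiv ℝ a (((y, s) : V m), p.2) (((0, 1) : V m), (0 : V m))) s := by
      have k1 := ((ha.differentiable (by simp)) (((y, s) : V m), p.2)).hasFDerivAt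
      have k2 : HasDerivAt (fun s : ℝ => (((y, s) : V m), p.2)) (((0, 1) : V m), (0 : V m)) s :=
        ((hasDerivAt_const s y).prodMk (hasDerivAt_id s)).prodMk (hasDerivAt_const s p.2)
      exact k1.comp_hasDerivAt s k2
    have h2 : HasDerivAt (fun s : ℝ => Complex.exp (Complex.I *
        Complex.ofReal ((⟪y - p.1.1, p.2.1⟫ + (s - p.1.2) * p.2.2) / h)))
        (Complex.exp (Complex.I *
        Complex.ofReal ((⟪y - p.1.1, p.2.1⟫ + (s - p.1.2) * p.2.2) / h)) *
          (Complex.I * Complex.ofReal ((1 * p.2.2) / h))) s := by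
      apply HasDerivAt.cexp
      apply HasDerivAt.const_mul
      apply HasDerivAt.ofReal_comp
      apply HasDerivAt.div_const
      apply HasDerivAt.const_add
      apply HasDerivAt.mul_const
      exact (hasDerivAt_id s).sub_const _
    convert! h2.mul h1 using 1
    unfold cc
    push_cast
    field_simp

lemma op_formula (m : ℕ) (a b : V m × V m → ℂ) (ψ : V m → ℂ)
    (ha : ContDiff ℝ (⊤ : ℕ∞) a) (hac : HasCompactSupport a)
    (hb : ContDiff ℝ (⊤ : ℕ∞) b) (hbc : HasCompactSupport b)
    (hψ : ContDiff ℝ (⊤ : ℕ∞) ψ) (hψc : HasCompactSupport ψ) (u : V m → ℂ) (hu : Continuous u)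
    (h : ℝ) (hh : 0 < h) (x : V m) :
    OpS m h b (fun y : V m =>
          ψ y * Xi0 m (OpS m h a (fun w : V m => ψ w * u w)) y) x =
      ((((2 * Real.pi * h) ^ (m + 1))⁻¹ * ((2 * Real.pi * h) ^ (m + 1))⁻¹ * h⁻¹ : ℝ) : ℂ) *
      ∫ q : ℝ × (V m × V m), (∫ z : V m × V m,
        Complex.exp (Complex.I * Complex.ofReal (phT m x q.2.2 q.2.1 q.1 z / h)) *
        ampT m a b ψ x q.2.2 q.2.1 q.1 h z) * u q.2.1
        ∂(((volume : Measure ℝ).restrict (Set.Ioc 0 1)).prod volume) := by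
  set H : (V m × V m) × (ℝ × (V m × V m)) → ℂ := fun p =>
    Complex.exp (Complex.I * Complex.ofReal (phT m x p.2.2.2 p.2.2.1 p.2.1 p.1 / h)) *
        ampT m a b ψ x p.2.2.2 p.2.2.1 p.2.1 h p.1 * u p.2.2.1 with hH
  have hHc : Continuous H := by
    have h1 : Continuous (fun p : (V m × V m) × (ℝ × (V m × V m)) =>
        phT m x p.2.2.2 p.2.2.1 p.2.1 p.1) :=
      (phT_contDiff m).continuous.comp (f := fun p : (V m × V m) × (ℝ × (V m × V m)) =>
        ((x, p.2.2.2, p.2.2.1, p.2.1, h), p.1)) (by fun_prop)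
    have h2 : Continuous (fun p : (V m × V m) × (ℝ × (V m × V m)) =>
        ampT m a b ψ x p.2.2.2 p.2.2.1 p.2.1 h p.1) :=
      (ampT_contDiff m a b ψ ha hb hψ).continuous.comp (f := fun p : (V m × V m) × (ℝ × (V m × V m)) =>
        ((x, p.2.2.2, p.2.2.1, p.2.1, h), p.1)) (by fun_prop)
    fun_prop
  have hHi : Integrable H ((volume : Measure (V m × V m)).prod
      (((volume : Measure ℝ).restrict (Set.Ioc 0 1)).prod volume)) := by
    refine integrable_cpt volume volume H hHc (tsupport ψ ×ˢ (Prod.snd '' tsupport b))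
      (tsupport ψ ×ˢ (Prod.snd '' tsupport a)) (hψc.prod (hbc.image continuous_snd))
      (hψc.prod (hac.image continuous_snd)) ?_
    intro z t r hne
    simp only [hH, mul_ne_zero_iff] at hne
    obtain ⟨k1, k2, k3, k4⟩ := ampT_ne _ _ _ _ _ _ _ _ _ _ hne.1.2
    exact ⟨⟨k2, ⟨_, k1, rfl⟩⟩, ⟨k4, ⟨_, k3, rfl⟩⟩⟩
  have e1 : ∀ y : V m, Xi0 m (OpS m h a (fun w : V m => ψ w * u w)) y =
      ∫ t in Set.Ioc (0:ℝ) 1, (((2 * Real.pi * h) ^ (m + 1))⁻¹ • ∫ p : V m × V m,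
        Complex.exp (Complex.I *
          Complex.ofReal ((⟪y.1 - p.1.1, p.2.1⟫ + (t * y.2 - p.1.2) * p.2.2) / h)) *
        ((h⁻¹ : ℝ) * cc m a h (((y.1, t * y.2) : V m), p.2)) * (ψ p.1 * u p.1)) := by
    intro y
    unfold Xi0
    rw [intervalIntegral.integral_of_le zero_le_one]
    congr 1
    funext t
    exact (opS_hasDerivAt m a ψ ha hac hψ hψc u hu h hh y.1 (t * y.2)).deriv
  set cn := ((2 * Real.pi * h) ^ (m + 1))⁻¹ with hcn
  have e2 : ∀ z : V m × V m, Complex.exp (Complex.I *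
        Complex.ofReal ((⟪x.1 - z.1.1, z.2.1⟫ + (x.2 - z.1.2) * z.2.2) / h)) *
      b (x, z.2) * (ψ z.1 * Xi0 m (OpS m h a (fun w : V m => ψ w * u w)) z.1) =
      ((cn * h⁻¹ : ℝ) : ℂ) * ∫ t in Set.Ioc (0:ℝ) 1, ∫ r : V m × V m, H (z, (t, r)) := by
    intro z
    rw [e1, ← mul_assoc, ← integral_const_mul, ← integral_const_mul]
    congr 1
    funext t
    rw [Complex.real_smul, ← integral_const_mul, ← integral_const_mul, ← integral_const_mul]
    congr 1
    funext r
    simp only [hH, phT, ampT, add_div, Complex.ofReal_add, mul_add, Complex.exp_add]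
    push_cast
    ring
  have e3 : ∫ z : V m × V m, ∫ t in Set.Ioc (0:ℝ) 1, ∫ r : V m × V m, H (z, (t, r)) =
      ∫ z : V m × V m, ∫ q : ℝ × (V m × V m), H (z, q)
        ∂(((volume : Measure ℝ).restrict (Set.Ioc 0 1)).prod volume) := by
    apply integral_congr_ae
    filter_upwards [hHi.prod_right_ae] with z hz
    exact (integral_prod _ hz).symm
  have e4 := integral_integral_swap (f := fun z q => H (z, q)) hHi
  rw [OpS]
  simp only [e2]
  rw [integral_const_mul, e3, e4, Complex.real_smul, ← mul_assoc, ← hcn]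
  congr 1
  · push_cast; ring
  · congr 1
    funext q
    rw [← integral_mul_const]

lemma op_bound (m : ℕ) (a b : V m × V m → ℂ) (ψ : V m → ℂ)
    (ha : ContDiff ℝ (⊤ : ℕ∞) a) (hac : HasCompactSupport a)
    (hb : ContDiff ℝ (⊤ : ℕ∞) b) (hbc : HasCompactSupport b)
    (hψ : ContDiff ℝ (⊤ : ℕ∞) ψ) (hψc : HasCompactSupport ψ)
    (hsupp : ∀ (x ξ : V m) (t : ℝ), t ∈ Set.Icc (0:ℝ) 1 →
      (((x.1, t * x.2) : V m), ξ) ∈ tsupport a → (x, ((ξ.1, t * ξ.2) : V m)) ∉ tsupport b)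
    (N : ℕ) : ∃ D : ℝ, 0 ≤ D ∧ ∀ h : ℝ, 0 < h → h ≤ 1 → ∀ u : V m → ℂ, Continuous u → ∀ x : V m,
      ‖OpS m h b (fun y : V m =>
          ψ y * Xi0 m (OpS m h a (fun w : V m => ψ w * u w)) y) x‖ ≤
        D * h ^ N * ∫ w in tsupport ψ, ‖u w‖ := by
  obtain ⟨C, hC0, hC⟩ := amp_bound m a b ψ ha hac hb hbc hψ hψc hsupp (N + 2 * (m + 1) + 1)
  set L : Set (V m) := Prod.snd '' tsupport a with hL
  have hLc : IsCompact L := hac.image continuous_snd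
  set A := ((2 * Real.pi) ^ (m + 1))⁻¹ with hA
  have hA0 : 0 ≤ A := by positivity
  refine ⟨A * A * C * volume.real L, by positivity, fun h hh hh1 u hu x => ?_⟩
  rw [op_formula m a b ψ ha hac hb hbc hψ hψc u hu h hh x, norm_mul, Complex.norm_real,
    Real.norm_of_nonneg (by positivity)]
  set B : ℝ × (V m × V m) → ℝ := fun q =>
    (fun _ : ℝ => C * h ^ (N + 2 * (m + 1) + 1)) q.1 *
      ((fun r : V m × V m => (tsupport ψ).indicator (fun w => ‖u w‖) r.1 * L.indicator (fun _ => (1:ℝ)) r.2) q.2)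
    with hB
  have i1 : Integrable ((tsupport ψ).indicator (fun w => ‖u w‖)) (volume : Measure (V m)) :=
    (integrable_indicator_iff (isClosed_tsupport ψ).measurableSet).2
      (hu.norm.continuousOn.integrableOn_compact hψc)
  have i2 : Integrable (L.indicator (fun _ => (1:ℝ))) (volume : Measure (V m)) :=
    (integrable_indicator_iff hLc.measurableSet).2 (integrableOn_const hLc.measure_lt_top.ne)
  have i3 : Integrable (fun r : V m × V m => (tsupport ψ).indicator (fun w => ‖u w‖) r.1 *
      L.indicator (fun _ => (1:ℝ)) r.2) (volume : Measure (V m × V m)) := i1.mul_prod i2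
  have i4 : Integrable B (((volume : Measure ℝ).restrict (Set.Ioc 0 1)).prod volume) :=
    Integrable.mul_prod (integrable_const _) i3
  have hBint : ∫ q, B q ∂(((volume : Measure ℝ).restrict (Set.Ioc 0 1)).prod volume) =
      C * h ^ (N + 2 * (m + 1) + 1) * ((∫ w in tsupport ψ, ‖u w‖) * volume.real L) := by
    refine (integral_prod_mul (fun _ : ℝ => C * h ^ (N + 2 * (m + 1) + 1))
      (fun r : V m × V m => (tsupport ψ).indicator (fun w => ‖u w‖) r.1 *
        L.indicator (fun _ => (1:ℝ)) r.2)).trans ?_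
    have : ∫ r : V m × V m, (tsupport ψ).indicator (fun w => ‖u w‖) r.1 *
      L.indicator (fun _ => (1:ℝ)) r.2 = (∫ w in tsupport ψ, ‖u w‖) * volume.real L := by
      have := integral_prod_mul (μ := (volume : Measure (V m))) (ν := (volume : Measure (V m)))
        ((tsupport ψ).indicator (fun w => ‖u w‖)) (L.indicator (fun _ => (1:ℝ)))
      rw [integral_indicator (isClosed_tsupport ψ).measurableSet,
        integral_indicator hLc.measurableSet] at this
      rw [Measure.volume_eq_prod, this]
      simp
    rw [this]
    simp
  have hnorm := norm_integral_le_of_norm_le (μ := ((volume : Measure ℝ).restrict (Set.Ioc 0 1)).prod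
    (volume : Measure (V m × V m)))
    (f := fun q : ℝ × (V m × V m) => (∫ z : V m × V m,
        Complex.exp (Complex.I * Complex.ofReal (phT m x q.2.2 q.2.1 q.1 z / h)) *
        ampT m a b ψ x q.2.2 q.2.1 q.1 h z) * u q.2.1) i4 ?_
  · rw [hBint] at hnorm
    refine (mul_le_mul_of_nonneg_left hnorm (by positivity)).trans (le_of_eq ?_)
    rw [hA, mul_pow (2 * Real.pi) h, mul_inv]
    have : h ≠ 0 := hh.ne'
    have e : h ^ (N + 2 * (m + 1) + 1) = h ^ N * h ^ (m + 1) * h ^ (m + 1) * h := by ring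
    rw [e]
    field_simp
  · have hae : ∀ᵐ q ∂(((volume : Measure ℝ).restrict (Set.Ioc 0 1)).prod
        (volume : Measure (V m × V m))), q.1 ∈ Set.Ioc (0:ℝ) 1 := by
      have : ∀ᵐ t ∂((volume : Measure ℝ).restrict (Set.Ioc 0 1)), t ∈ Set.Ioc (0:ℝ) 1 :=
        ae_restrict_mem measurableSet_Ioc
      exact Measure.quasiMeasurePreserving_fst.ae this
    filter_upwards [hae] with q hq
    rw [norm_mul]
    by_cases hw : q.2.1 ∈ tsupport ψ ∧ q.2.2 ∈ L
    · simp only [hB, Set.indicator_of_mem hw.1, Set.indicator_of_mem hw.2, mul_one]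
      exact mul_le_mul_of_nonneg_right (hC h hh hh1 q.1 (Set.Ioc_subset_Icc_self hq) x q.2.2 q.2.1)
        (norm_nonneg _)
    · have : ∀ z, ampT m a b ψ x q.2.2 q.2.1 q.1 h z = 0 := by
        intro z
        by_contra hne
        have := ampT_ne _ _ _ _ _ _ _ _ _ _ hne
        exact hw ⟨this.2.2.2, ⟨_, this.2.2.1, rfl⟩⟩
      simp only [this, mul_zero, integral_zero, norm_zero, zero_mul, hB]
      refine mul_nonneg (by positivity) (mul_nonneg ?_ ?_)
      · exact Set.indicator_nonneg (fun _ _ => norm_nonneg _) _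
      · exact Set.indicator_nonneg (fun _ _ => zero_le_one) _

/-- under the support separation condition between `a` and `b`, the operator
`Op_h(b) ψ Ξ₀ Op_h(a) ψ` is `O(h^N)` on `L²` for every `N`. -/
theorem stmt_15 (m : ℕ) (a b : V m × V m → ℂ) (ψ : V m → ℂ)
    (ha : ContDiff ℝ (⊤ : ℕ∞) a) (hac : HasCompactSupport a)
    (hb : ContDiff ℝ (⊤ : ℕ∞) b) (hbc : HasCompactSupport b)
    (hψ : ContDiff ℝ (⊤ : ℕ∞) ψ) (hψc : HasCompactSupport ψ)
    (hsupp : ∀ (x ξ : V m) (t : ℝ), t ∈ Set.Icc (0:ℝ) 1 →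
      (((x.1, t * x.2) : V m), ξ) ∈ tsupport a → (x, ((ξ.1, t * ξ.2) : V m)) ∉ tsupport b) :
    ∀ N : ℕ, ∃ C > 0, ∀ h : ℝ, 0 < h → h ≤ 1 → ∀ u : SchwartzMap (V m) ℂ,
      eLpNorm (OpS m h b (fun y : V m =>
          ψ y * Xi0 m (OpS m h a (fun w : V m => ψ w * u w)) y)) 2 volume ≤
        ENNReal.ofReal (C * h ^ N) * eLpNorm (⇑u) 2 volume := by
  intro N
  obtain ⟨D, hD0, hD⟩ := op_bound m a b ψ ha hac hb hbc hψ hψc hsupp N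
  set K : Set (V m) := Prod.fst '' tsupport b with hK
  have hKc : IsCompact K := hbc.image continuous_fst
  set S : Set (V m) := tsupport ψ with hS
  have hKt : (volume K) ^ (1 / (2 : ENNReal).toReal) ≠ ⊤ :=
    (ENNReal.rpow_lt_top_of_nonneg (by simp) hKc.measure_lt_top.ne).ne
  have hSt : (volume S) ^ (1 / (1 : ENNReal).toReal - 1 / (2 : ENNReal).toReal) ≠ ⊤ :=
    (ENNReal.rpow_lt_top_of_nonneg (by norm_num) hψc.measure_lt_top.ne).ne
  set cK := ((volume K) ^ (1 / (2 : ENNReal).toReal)).toReal with hcK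
  set cS := ((volume S) ^ (1 / (1 : ENNReal).toReal - 1 / (2 : ENNReal).toReal)).toReal with hcS
  have hcK0 : 0 ≤ cK := ENNReal.toReal_nonneg
  have hcS0 : 0 ≤ cS := ENNReal.toReal_nonneg
  refine ⟨D * cK * cS + 1, by positivity, fun h hh hh1 u => ?_⟩
  set I1 := ∫ w in S, ‖u w‖ with hI1
  have hI0 : 0 ≤ I1 := integral_nonneg fun _ => norm_nonneg _
  have hI : ENNReal.ofReal I1 ≤ eLpNorm (⇑u) 2 volume * ENNReal.ofReal cS := by
    have hint : IntegrableOn (⇑u) S volume := u.continuous.continuousOn.integrableOn_compact hψc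
    rw [hI1, ofReal_integral_norm_eq_lintegral_enorm hint, ← eLpNorm_one_eq_lintegral_enorm]
    refine (eLpNorm_le_eLpNorm_mul_rpow_measure_univ (q := 2) (by norm_num)
      u.continuous.aestronglyMeasurable).trans ?_
    rw [Measure.restrict_apply_univ, hcS, ENNReal.ofReal_toReal hSt]
    gcongr
    exact Measure.restrict_le_self
  calc _ ≤ eLpNorm (K.indicator fun _ => D * h ^ N * I1) 2 volume := by
        apply eLpNorm_mono_real
        intro x
        by_cases hx : x ∈ K
        · rw [Set.indicator_of_mem hx]
          exact hD h hh hh1 u u.continuous x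
        · rw [Set.indicator_of_notMem hx]
          have : ∀ ξ, b (x, ξ) = 0 := fun ξ => by
            by_contra hne
            exact hx ⟨_, subset_tsupport _ hne, rfl⟩
          simp [OpS, this]
    _ ≤ ‖D * h ^ N * I1‖ₑ * (volume K) ^ (1 / (2 : ENNReal).toReal) :=
        eLpNorm_indicator_const_le _ _
    _ = ENNReal.ofReal (D * h ^ N * cK) * ENNReal.ofReal I1 := by
        rw [← ENNReal.ofReal_toReal hKt, ← hcK, Real.enorm_of_nonneg (by positivity),
          ← ENNReal.ofReal_mul (by positivity), ← ENNReal.ofReal_mul (by positivity)]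
        congr 1; ring
    _ ≤ ENNReal.ofReal (D * h ^ N * cK) * (eLpNorm (⇑u) 2 volume * ENNReal.ofReal cS) := by
        gcongr
    _ = ENNReal.ofReal (D * cK * cS * h ^ N) * eLpNorm (⇑u) 2 volume := by
        rw [mul_comm (eLpNorm _ _ _), ← mul_assoc, ← ENNReal.ofReal_mul (by positivity)]
        congr 2; ring
    _ ≤ _ := by
        gcongr
        linarith
end
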